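/- For k₊ = (√6+√2)/4, the complete elliptic integral of the second kind satisfies E(k₊) = 2^(1/3)·3^(-1/4)·π²·Γ(1/3)^(-3) + 2^(-10/3)·3^(1/4)·π^(-1)·(√3 - 1)·Γ(1/3)³. -/

import Mathlib

open Real MeasureTheory

/-- The complete elliptic integral of the second kind,
`E(k) = ∫₀^{π/2} √(1 - k² sin²θ) dθ`. -/
noncomputable def ellipticE (k : ℝ) : ℝ :=
  ∫ θ in (0:ℝ)..(π/2), Real.sqrt (1 - k^2 * Real.sin θ ^ 2)

/-!
The substitution `t = tan² (φ / 2)` turns `2 E(k) = ∫₀^π √(1 - k² sin² φ) dφ` into an integral of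
`√((1 + t)² - 4 k² t) / (√t (1 + t)²)` over `t > 0`. For `k = k₊` we have `4 k² = 2 + √3`, and with
`t = (x + 1) / √3` the radicand becomes `(x² - x + 1) / 3`, where `(x + 1) (x² - x + 1) = 1 + x³`:
the integrand becomes a differential on the curve `y² = 1 + x³` whose only poles lie over
`x = -1 - √3`.

Subtracting the exact differential of `y / (x + 1 + √3)` cancels these poles and leaves multiples of
`dx / y` and `x dx / y`, which are Beta integrals on `(-1, 0)`. On `(0, ∞)` the form `x dx / y` is
not integrable; subtracting also the differential of `x² / y` replaces it by `x dx / y³`.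
The contributions at `x = 0` cancel, and the functional equations of `Γ` reduce the four resulting
beta values to `Γ(1/3)`.
-/

open ProbabilityTheory Set Filter Topology

/-! ### Beta integrals -/

lemma integral_rpow_mul_one_sub_rpow {a b : ℝ} (ha : 0 < a) (hb : 0 < b) :
    ∫ x in (0 : ℝ)..1, x ^ (a - 1) * (1 - x) ^ (b - 1) = beta a b := by
  rw [beta_eq_betaIntegralReal a b ha hb, Complex.betaIntegral,
    ← Complex.ofReal_re (∫ x in (0 : ℝ)..1, _), ← intervalIntegral.integral_ofReal]
  congr 1
  refine intervalIntegral.integral_congr fun x hx ↦ ?_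
  rw [uIcc_of_le zero_le_one] at hx
  push_cast [Complex.ofReal_cpow hx.1, Complex.ofReal_cpow (sub_nonneg.2 hx.2)]
  rfl

lemma rpow_rpow_div_sub_one_mul_rpow_sub_one {x p : ℝ} (hx : 0 < x) (hp : p ≠ 0) (s : ℝ) :
    (x ^ p) ^ (s / p - 1) * x ^ (p - 1) = x ^ (s - 1) := by
  rw [← rpow_mul hx.le, ← rpow_add hx, mul_sub, mul_div_cancel₀ s hp, mul_one,
    sub_add_sub_cancel]

lemma integral_rpow_mul_one_sub_rpow_rpow {s p b : ℝ} (hs : 0 < s) (hp : 0 < p) (hb : 0 < b) :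
    ∫ x in (0 : ℝ)..1, x ^ (s - 1) * (1 - x ^ p) ^ (b - 1) = beta (s / p) b / p := by
  have hsub := integral_Icc_deriv_smul_of_deriv_nonneg (f := fun x : ℝ ↦ x ^ p)
    (f' := fun x ↦ p * x ^ (p - 1)) (g := fun y ↦ y ^ (s / p - 1) * (1 - y) ^ (b - 1))
    (continuous_rpow_const hp.le).continuousOn
    (fun x hx ↦ hasDerivAt_rpow_const (.inl hx.1.ne'))
    (fun x hx ↦ mul_nonneg hp.le (rpow_nonneg hx.1.le _)) zero_le_one
  simp only [zero_rpow hp.ne', one_rpow, integral_Icc_eq_integral_Ioo, smul_eq_mul] at hsub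
  rw [← integral_rpow_mul_one_sub_rpow (div_pos hs hp) hb,
    intervalIntegral.integral_of_le zero_le_one, intervalIntegral.integral_of_le zero_le_one,
    integral_Ioc_eq_integral_Ioo, integral_Ioc_eq_integral_Ioo, ← hsub, eq_div_iff hp.ne',
    ← integral_mul_const]
  refine setIntegral_congr_fun measurableSet_Ioo fun x hx ↦ ?_
  simp only [← rpow_rpow_div_sub_one_mul_rpow_sub_one hx.1 hp.ne' s]
  ring

lemma strictMonoOn_div_one_add : StrictMonoOn (fun t : ℝ ↦ t / (1 + t)) (Ioi 0) := by
  intro t ht u hu htu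
  rw [mem_Ioi] at ht hu
  simp only
  rw [div_lt_div_iff₀ (by positivity) (by positivity)]
  linarith

lemma image_div_one_add_Ioi : (fun t : ℝ ↦ t / (1 + t)) '' Ioi 0 = Ioo 0 1 := by
  ext y
  constructor
  · rintro ⟨t, ht, rfl⟩
    rw [mem_Ioi] at ht
    exact ⟨by positivity, (div_lt_one (by positivity)).2 (by linarith)⟩
  · rintro ⟨hy0, hy1⟩
    have : 0 < 1 - y := sub_pos.2 hy1
    refine ⟨y / (1 - y), div_pos hy0 this, ?_⟩
    field_simp
    ring

lemma integral_Ioi_rpow_mul_one_add_rpow {a b : ℝ} (ha : 0 < a) (hb : 0 < b) :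
    ∫ t in Ioi (0 : ℝ), t ^ (a - 1) * (1 + t) ^ (-(a + b)) = beta a b := by
  have hderiv (t : ℝ) (ht : t ∈ Ioi 0) :
      HasDerivWithinAt (fun t : ℝ ↦ t / (1 + t)) ((1 + t) ^ 2)⁻¹ (Ioi 0) t := by
    rw [mem_Ioi] at ht
    have h := (hasDerivAt_id t).div ((hasDerivAt_id t).const_add 1)
      (by simp only [id]; positivity)
    convert! h.hasDerivWithinAt using 1
    simp [field]
  rw [← integral_rpow_mul_one_sub_rpow ha hb, intervalIntegral.integral_of_le zero_le_one,
    integral_Ioc_eq_integral_Ioo, ← image_div_one_add_Ioi,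
    integral_image_eq_integral_deriv_smul_of_monotoneOn measurableSet_Ioi hderiv
      strictMonoOn_div_one_add.monotoneOn]
  refine setIntegral_congr_fun measurableSet_Ioi fun t ht ↦ ?_
  rw [mem_Ioi] at ht
  have h1 : 0 < 1 + t := by positivity
  have hcompl : 1 - t / (1 + t) = (1 + t)⁻¹ := by field_simp; ring
  have hexp : (1 + t) ^ (-(a + b)) =
      ((1 + t) ^ 2)⁻¹ * ((1 + t) ^ (a - 1))⁻¹ * ((1 + t) ^ (b - 1))⁻¹ := by
    rw [← rpow_natCast, ← rpow_neg h1.le, ← rpow_neg h1.le, ← rpow_neg h1.le, ← rpow_add h1,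
      ← rpow_add h1]
    congr 1
    push_cast
    ring
  simp only [smul_eq_mul]
  rw [hcompl, hexp, div_rpow ht.le h1.le, inv_rpow h1.le]
  ring

lemma integral_Ioi_rpow_mul_one_add_rpow_rpow {s p b : ℝ} (hs : 0 < s) (hp : 0 < p) (hb : 0 < b) :
    ∫ x in Ioi (0 : ℝ), x ^ (s - 1) * (1 + x ^ p) ^ (-(s / p + b)) = beta (s / p) b / p := by
  rw [← integral_Ioi_rpow_mul_one_add_rpow (div_pos hs hp) hb,
    ← integral_comp_rpow_Ioi_of_pos
      (g := fun y ↦ y ^ (s / p - 1) * (1 + y) ^ (-(s / p + b))) hp,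
    eq_div_iff hp.ne', ← integral_mul_const]
  refine setIntegral_congr_fun measurableSet_Ioi fun x hx ↦ ?_
  simp only [smul_eq_mul, ← rpow_rpow_div_sub_one_mul_rpow_sub_one hx hp.ne' s]
  ring

lemma integral_pow_div_sqrt_one_sub_pow (m : ℕ) {n : ℕ} (hn : n ≠ 0) :
    ∫ x in (0 : ℝ)..1, x ^ m / √(1 - x ^ n) = beta ((m + 1) / n) (1 / 2) / n := by
  rw [← integral_rpow_mul_one_sub_rpow_rpow (s := m + 1) (p := n) (by positivity) (by positivity)
    one_half_pos]
  refine intervalIntegral.integral_congr fun x hx ↦ ?_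
  rw [uIcc_of_le zero_le_one] at hx
  have h : 0 ≤ 1 - x ^ n := sub_nonneg.2 (pow_le_one₀ hx.1 hx.2)
  simp only [add_sub_cancel_right, rpow_natCast]
  rw [div_eq_mul_inv, sqrt_eq_rpow, ← rpow_neg h]
  norm_num

lemma integral_pow_div_sqrt_one_add_pow (m : ℕ) {n : ℕ} (hn : Odd n) :
    ∫ x in (-1 : ℝ)..0, x ^ m / √(1 + x ^ n) = (-1) ^ m * (beta ((m + 1) / n) (1 / 2) / n) := by
  have hneg := intervalIntegral.integral_comp_neg (a := 0) (b := 1)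
    fun x : ℝ ↦ x ^ m / √(1 + x ^ n)
  rw [neg_zero] at hneg
  rw [← integral_pow_div_sqrt_one_sub_pow m hn.pos.ne', ← intervalIntegral.integral_const_mul,
    ← hneg]
  refine intervalIntegral.integral_congr fun x _ ↦ ?_
  simp only [hn.neg_pow, neg_pow x m, ← sub_eq_add_neg, mul_div_assoc]

lemma integral_Ioi_pow_div_sqrt_one_add_pow_pow (m : ℕ) {n j : ℕ} (hn : n ≠ 0)
    (hj : (m + 1 : ℝ) / n < j / 2) :
    ∫ x in Ioi (0 : ℝ), x ^ m / √(1 + x ^ n) ^ j =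
      beta ((m + 1) / n) (j / 2 - (m + 1) / n) / n := by
  rw [← integral_Ioi_rpow_mul_one_add_rpow_rpow (s := m + 1) (p := n) (by positivity)
    (by positivity) (sub_pos.2 hj)]
  refine setIntegral_congr_fun measurableSet_Ioi fun x hx ↦ ?_
  rw [mem_Ioi] at hx
  have h : 0 ≤ 1 + x ^ n := by positivity
  simp only [add_sub_cancel_right, add_sub_cancel, rpow_natCast]
  rw [rpow_neg h, rpow_div_two_eq_sqrt _ h, rpow_natCast, div_eq_mul_inv]

/-! ### An algebraic form of the elliptic integral -/

lemma two_mul_ellipticE (k : ℝ) :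
    2 * ellipticE k = ∫ φ in (0 : ℝ)..π, √(1 - k ^ 2 * sin φ ^ 2) := by
  have hint (a b : ℝ) : IntervalIntegrable (fun φ ↦ √(1 - k ^ 2 * sin φ ^ 2)) volume a b :=
    Continuous.intervalIntegrable (by fun_prop) a b
  have hreflect := intervalIntegral.integral_comp_sub_left (a := 0) (b := π / 2)
    (fun φ ↦ √(1 - k ^ 2 * sin φ ^ 2)) π
  simp only [sin_pi_sub, sub_zero, sub_half] at hreflect
  rw [← intervalIntegral.integral_add_adjacent_intervals (hint 0 (π / 2)) (hint (π / 2) π),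
    ← hreflect, two_mul, ellipticE]

lemma sin_two_mul_arctan_sqrt_sq {t : ℝ} (ht : 0 ≤ t) :
    sin (2 * arctan √t) ^ 2 = 4 * t / (1 + t) ^ 2 := by
  rw [sin_two_mul, mul_pow, mul_pow, sin_sq_arctan, cos_sq_arctan, sq_sqrt ht]
  field_simp
  ring

lemma hasDerivAt_two_mul_arctan_sqrt {t : ℝ} (ht : 0 < t) :
    HasDerivAt (fun t ↦ 2 * arctan √t) (√t * (1 + t))⁻¹ t := by
  convert! (hasDerivAt_sqrt ht.ne').arctan.const_mul 2 using 1
  rw [sq_sqrt ht.le]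
  field_simp

lemma strictMonoOn_two_mul_arctan_sqrt : StrictMonoOn (fun t ↦ 2 * arctan √t) (Ici 0) :=
  fun _ ht _ _ htu ↦ mul_lt_mul_of_pos_left (arctan_strictMono (sqrt_lt_sqrt ht htu)) two_pos

lemma image_two_mul_arctan_sqrt_Ioi : (fun t ↦ 2 * arctan √t) '' Ioi 0 = Ioo 0 π := by
  ext φ
  constructor
  · rintro ⟨t, ht, rfl⟩
    exact ⟨mul_pos two_pos (arctan_pos.2 (sqrt_pos.2 ht)), by linarith [arctan_lt_pi_div_two √t]⟩
  · rintro ⟨h0, hπ⟩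
    have htan : 0 < tan (φ / 2) := tan_pos_of_pos_of_lt_pi_div_two (by linarith) (by linarith)
    refine ⟨tan (φ / 2) ^ 2, pow_pos htan 2, ?_⟩
    simp only
    rw [sqrt_sq htan.le, arctan_tan (by linarith) (by linarith)]
    ring

lemma deriv_smul_sqrt_comp_two_mul_arctan_sqrt (k : ℝ) {t : ℝ} (ht : 0 < t) :
    (√t * (1 + t))⁻¹ • √(1 - k ^ 2 * sin (2 * arctan √t) ^ 2) =
      √((1 + t) ^ 2 - 4 * k ^ 2 * t) / (√t * (1 + t) ^ 2) := by
  have h : 1 - k ^ 2 * (4 * t / (1 + t) ^ 2) =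
      ((1 + t) ^ 2 - 4 * k ^ 2 * t) / (1 + t) ^ 2 := by
    field_simp
  rw [sin_two_mul_arctan_sqrt_sq ht.le, h, sqrt_div' _ (by positivity), sqrt_sq (by positivity)]
  simp only [smul_eq_mul]
  field_simp

lemma integrableOn_ellipticE_algebraic (k : ℝ) :
    IntegrableOn (fun t ↦ √((1 + t) ^ 2 - 4 * k ^ 2 * t) / (√t * (1 + t) ^ 2)) (Ioi 0) := by
  have hcont : Continuous fun φ ↦ √(1 - k ^ 2 * sin φ ^ 2) := by fun_prop
  have hint : IntegrableOn (fun φ ↦ √(1 - k ^ 2 * sin φ ^ 2)) (Ioo 0 π) :=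
    hcont.integrableOn_Icc.mono_set Ioo_subset_Icc_self
  rw [← image_two_mul_arctan_sqrt_Ioi,
    integrableOn_image_iff_integrableOn_deriv_smul_of_monotoneOn measurableSet_Ioi
      (fun t ht ↦ (hasDerivAt_two_mul_arctan_sqrt ht).hasDerivWithinAt)
      (strictMonoOn_two_mul_arctan_sqrt.mono Ioi_subset_Ici_self).monotoneOn] at hint
  exact hint.congr_fun (fun t ht ↦ deriv_smul_sqrt_comp_two_mul_arctan_sqrt k ht) measurableSet_Ioi

lemma two_mul_ellipticE_eq_integral_Ioi (k : ℝ) :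
    2 * ellipticE k =
      ∫ t in Ioi 0, √((1 + t) ^ 2 - 4 * k ^ 2 * t) / (√t * (1 + t) ^ 2) := by
  rw [two_mul_ellipticE, intervalIntegral.integral_of_le pi_pos.le, integral_Ioc_eq_integral_Ioo,
    ← image_two_mul_arctan_sqrt_Ioi,
    integral_image_eq_integral_deriv_smul_of_monotoneOn measurableSet_Ioi
      (fun t ht ↦ (hasDerivAt_two_mul_arctan_sqrt ht).hasDerivWithinAt)
      (strictMonoOn_two_mul_arctan_sqrt.mono Ioi_subset_Ici_self).monotoneOn]
  exact setIntegral_congr_fun measurableSet_Ioi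
    fun t ht ↦ deriv_smul_sqrt_comp_two_mul_arctan_sqrt k ht

/-! ### The curve `y² = 1 + x³` -/

/-- The integrand of `2 · 3^(-1/4) · E(k₊)` on the curve `y² = 1 + x³`, in the coordinate `x > -1`
given by `tan² (φ / 2) = (x + 1) / √3`. -/
noncomputable def singularIntegrand (x : ℝ) : ℝ :=
  (x ^ 2 - x + 1) / ((x + 1 + √3) ^ 2 * √(1 + x ^ 3))

lemma one_add_pow_three_pos {x : ℝ} (hx : -1 < x) : 0 < 1 + x ^ 3 := by
  have hfactor : 1 + x ^ 3 = (x + 1) * ((x - 1 / 2) ^ 2 + 3 / 4) := by ring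
  have : 0 < x + 1 := by linarith
  rw [hfactor]
  positivity

lemma image_add_one_div_sqrt_three_Ioi : (fun x : ℝ ↦ (x + 1) / √3) '' Ioi (-1) = Ioi 0 := by
  ext t
  constructor
  · rintro ⟨x, hx, rfl⟩
    exact div_pos (neg_lt_iff_pos_add.1 hx) (sqrt_pos.2 three_pos)
  · intro ht
    rw [mem_Ioi] at ht
    exact ⟨√3 * t - 1, by simpa using by positivity, by simp⟩

lemma strictMono_add_one_div_sqrt_three : StrictMono fun x : ℝ ↦ (x + 1) / √3 :=
  fun _ _ h ↦ div_lt_div_of_pos_right (add_lt_add_left h 1) (sqrt_pos.2 three_pos)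

lemma hasDerivAt_add_one_div_sqrt_three (x : ℝ) :
    HasDerivAt (fun x ↦ (x + 1) / √3) (√3)⁻¹ x := by
  simpa using ((hasDerivAt_id x).add_const 1).div_const √3

lemma four_mul_sq_singular_modulus : 4 * ((√6 + √2) / 4) ^ 2 = 2 + √3 := by
  have h6 : √6 = √2 * √3 := by rw [← sqrt_mul zero_le_two]; norm_num
  have h2 : √2 ^ 2 = 2 := sq_sqrt zero_le_two
  have h3 : √3 ^ 2 = 3 := sq_sqrt zero_le_three
  rw [h6]
  linear_combination (√3 ^ 2 + 2 * √3 + 1) / 4 * h2 + 1 / 2 * h3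

lemma deriv_smul_ellipticE_algebraic_comp {x : ℝ} (hx : -1 < x) :
    (√3)⁻¹ • (√((1 + (x + 1) / √3) ^ 2 - 4 * ((√6 + √2) / 4) ^ 2 * ((x + 1) / √3)) /
      (√((x + 1) / √3) * (1 + (x + 1) / √3) ^ 2)) = √√3 * singularIntegrand x := by
  have hu : 0 < x + 1 := neg_lt_iff_pos_add.1 hx
  have hQ : 0 < x ^ 2 - x + 1 := by nlinarith [sq_nonneg (x - 1)]
  have h3 : √3 ^ 2 = 3 := sq_sqrt zero_le_three
  have hquad : (1 + (x + 1) / √3) ^ 2 - (2 + √3) * ((x + 1) / √3) = (x ^ 2 - x + 1) / √3 ^ 2 := by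
    field_simp
    linear_combination -x * h3
  have hcurve : 1 + x ^ 3 = (x + 1) * (x ^ 2 - x + 1) := by ring
  have hQsq : √(x ^ 2 - x + 1) ^ 2 = x ^ 2 - x + 1 := sq_sqrt hQ.le
  rw [four_mul_sq_singular_modulus, hquad, sqrt_div hQ.le, sqrt_sq (sqrt_nonneg 3),
    sqrt_div hu.le, singularIntegrand, hcurve, sqrt_mul hu.le, smul_eq_mul]
  generalize x ^ 2 - x + 1 = Q at *
  field_simp
  rw [hQsq]
  ring

lemma integrableOn_singularIntegrand : IntegrableOn singularIntegrand (Ioi (-1)) := by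
  have hint := integrableOn_ellipticE_algebraic ((√6 + √2) / 4)
  rw [← image_add_one_div_sqrt_three_Ioi,
    integrableOn_image_iff_integrableOn_deriv_smul_of_monotoneOn measurableSet_Ioi
      (fun x _ ↦ (hasDerivAt_add_one_div_sqrt_three x).hasDerivWithinAt)
      (strictMono_add_one_div_sqrt_three.monotone.monotoneOn _)] at hint
  exact (integrable_const_mul_iff (isUnit_iff_ne_zero.2 (by positivity)) _).1
    (hint.congr_fun (fun x hx ↦ deriv_smul_ellipticE_algebraic_comp hx) measurableSet_Ioi)

lemma two_mul_ellipticE_eq_integral_singularIntegrand :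
    2 * ellipticE ((√6 + √2) / 4) = √√3 * ∫ x in Ioi (-1), singularIntegrand x := by
  rw [two_mul_ellipticE_eq_integral_Ioi, ← image_add_one_div_sqrt_three_Ioi,
    integral_image_eq_integral_deriv_smul_of_monotoneOn measurableSet_Ioi
      (fun x _ ↦ (hasDerivAt_add_one_div_sqrt_three x).hasDerivWithinAt)
      (strictMono_add_one_div_sqrt_three.monotone.monotoneOn _), ← integral_const_mul]
  exact setIntegral_congr_fun measurableSet_Ioi fun x hx ↦ deriv_smul_ellipticE_algebraic_comp hx

lemma hasDerivAt_sqrt_one_add_pow_three {x : ℝ} (hx : -1 < x) :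
    HasDerivAt (fun x ↦ √(1 + x ^ 3)) (3 * x ^ 2 / (2 * √(1 + x ^ 3))) x := by
  simpa using ((hasDerivAt_pow 3 x).const_add 1).sqrt (one_add_pow_three_pos hx).ne'

lemma hasDerivAt_sqrt_one_add_pow_three_div {x : ℝ} (hx : -1 < x) :
    HasDerivAt (fun x ↦ √(1 + x ^ 3) / (x + 1 + √3))
      (√3 * singularIntegrand x - (√3 - 1) / 2 * (1 / √(1 + x ^ 3)) +
        1 / 2 * (x / √(1 + x ^ 3))) x := by
  have hden : 0 < x + 1 + √3 := add_pos (neg_lt_iff_pos_add.1 hx) (by positivity)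
  have hy : 0 < √(1 + x ^ 3) := sqrt_pos.2 (one_add_pow_three_pos hx)
  have hy2 : √(1 + x ^ 3) ^ 2 = 1 + x ^ 3 := sq_sqrt (one_add_pow_three_pos hx).le
  have h3 : √3 ^ 2 = 3 := sq_sqrt zero_le_three
  convert! (hasDerivAt_sqrt_one_add_pow_three hx).div
    (((hasDerivAt_id x).add_const 1).add_const √3) hden.ne' using 1
  simp only [singularIntegrand, id]
  field_simp
  rw [hy2]
  linear_combination (-x - 1 - √3) * h3

lemma hasDerivAt_sqrt_one_add_pow_three_div_sub {x : ℝ} (hx : -1 < x) :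
    HasDerivAt (fun x ↦ √(1 + x ^ 3) / (x + 1 + √3) - x ^ 2 / √(1 + x ^ 3))
      (√3 * singularIntegrand x - (√3 - 1) / 2 * (1 / √(1 + x ^ 3)) -
        3 / 2 * (x / √(1 + x ^ 3) ^ 3)) x := by
  have hy : 0 < √(1 + x ^ 3) := sqrt_pos.2 (one_add_pow_three_pos hx)
  have hy2 : √(1 + x ^ 3) ^ 2 = 1 + x ^ 3 := sq_sqrt (one_add_pow_three_pos hx).le
  convert! (hasDerivAt_sqrt_one_add_pow_three_div hx).sub
    ((hasDerivAt_pow 2 x).div (hasDerivAt_sqrt_one_add_pow_three hx) hy.ne') using 1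
  field_simp
  rw [hy2]
  push_cast
  ring

lemma tendsto_sqrt_one_add_pow_three_div_sub {c : ℝ} (hc : 0 ≤ c) :
    Tendsto (fun x ↦ √(1 + x ^ 3) / (x + c) - x ^ 2 / √(1 + x ^ 3)) atTop (𝓝 0) := by
  have hbound : Tendsto (fun x ↦ (1 + c) * (√x)⁻¹) atTop (𝓝 0) := by
    simpa using (tendsto_inv_atTop_zero.comp tendsto_sqrt_atTop).const_mul (1 + c)
  refine squeeze_zero_norm' ?_ hbound
  filter_upwards [eventually_ge_atTop 1] with x hx
  have hy2 : √(1 + x ^ 3) ^ 2 = 1 + x ^ 3 := sq_sqrt (by positivity)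
  have hdiff : √(1 + x ^ 3) / (x + c) - x ^ 2 / √(1 + x ^ 3) =
      (1 - c * x ^ 2) / (√(1 + x ^ 3) * (x + c)) := by
    field_simp
    rw [hy2]
    ring
  have hnum : |1 - c * x ^ 2| ≤ (1 + c) * x ^ 2 := by
    rw [abs_le]
    constructor <;> nlinarith [mul_nonneg hc (sq_nonneg x)]
  have hden : √x * x * x ≤ √(1 + x ^ 3) * (x + c) := by
    gcongr
    · refine le_sqrt_of_sq_le ?_
      rw [mul_pow, sq_sqrt (by positivity)]
      linarith
    · linarith
  rw [hdiff, norm_div, norm_eq_abs, norm_of_nonneg (by positivity : 0 ≤ √(1 + x ^ 3) * (x + c))]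
  calc |1 - c * x ^ 2| / (√(1 + x ^ 3) * (x + c))
      ≤ (1 + c) * x ^ 2 / (√x * x * x) := by gcongr
    _ = (1 + c) * (√x)⁻¹ := by field_simp

lemma sqrt_three_mul_integral_singularIntegrand :
    √3 * ∫ x in (-1 : ℝ)..0, singularIntegrand x =
      (√3 - 1) / 2 * (beta (1 / 3) (1 / 2) / 3) + 1 / 2 * (beta (2 / 3) (1 / 2) / 3) +
        1 / (1 + √3) := by
  have h0 : ∫ x in (-1 : ℝ)..0, 1 / √(1 + x ^ 3) = beta (1 / 3) (1 / 2) / 3 := by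
    simpa using integral_pow_div_sqrt_one_add_pow 0 (n := 3) (by decide)
  have h1 : ∫ x in (-1 : ℝ)..0, x / √(1 + x ^ 3) = -(beta (2 / 3) (1 / 2) / 3) := by
    simpa [one_add_one_eq_two] using integral_pow_div_sqrt_one_add_pow 1 (n := 3) (by decide)
  have hpos {a : ℝ} (ha : 0 < a) : 0 < beta a (1 / 2) / 3 :=
    div_pos (beta_pos ha one_half_pos) three_pos
  have i0 := (intervalIntegral.intervalIntegrable_of_integral_ne_zero
    (h0.trans_ne (hpos (by norm_num)).ne')).const_mul ((√3 - 1) / 2)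
  have i1 := (intervalIntegral.intervalIntegrable_of_integral_ne_zero
    (h1.trans_ne (neg_ne_zero.2 (hpos (by norm_num)).ne'))).const_mul (1 / 2)
  have iF : IntervalIntegrable (fun x ↦ √3 * singularIntegrand x) volume (-1) 0 :=
    ((intervalIntegrable_iff_integrableOn_Ioc_of_le (by norm_num)).2
      (integrableOn_singularIntegrand.mono_set Ioc_subset_Ioi_self)).const_mul √3
  have hcont : ContinuousOn (fun x ↦ √(1 + x ^ 3) / (x + 1 + √3)) (Icc (-1) 0) :=
    ContinuousOn.div (by fun_prop) (by fun_prop) fun x hx ↦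
      (add_pos_of_nonneg_of_pos (neg_le_iff_add_nonneg.1 hx.1) (by positivity)).ne'
  have hftc := intervalIntegral.integral_eq_sub_of_hasDerivAt_of_le (by norm_num) hcont
    (fun x hx ↦ hasDerivAt_sqrt_one_add_pow_three_div hx.1) ((iF.sub i0).add i1)
  rw [intervalIntegral.integral_add (iF.sub i0) i1, intervalIntegral.integral_sub iF i0,
    intervalIntegral.integral_const_mul, intervalIntegral.integral_const_mul,
    intervalIntegral.integral_const_mul, h0, h1] at hftc
  norm_num at hftc ⊢
  linarith

lemma sqrt_three_mul_integral_Ioi_singularIntegrand :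
    √3 * ∫ x in Ioi (0 : ℝ), singularIntegrand x =
      (√3 - 1) / 2 * (beta (1 / 3) (1 / 6) / 3) + 3 / 2 * (beta (2 / 3) (5 / 6) / 3) -
        1 / (1 + √3) := by
  have h0 : ∫ x in Ioi (0 : ℝ), 1 / √(1 + x ^ 3) = beta (1 / 3) (1 / 6) / 3 := by
    have h := integral_Ioi_pow_div_sqrt_one_add_pow_pow 0 (n := 3) (j := 1) (by decide)
      (by norm_num)
    norm_num at h ⊢
    exact h
  have h1 : ∫ x in Ioi (0 : ℝ), x / √(1 + x ^ 3) ^ 3 = beta (2 / 3) (5 / 6) / 3 := by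
    have h := integral_Ioi_pow_div_sqrt_one_add_pow_pow 1 (n := 3) (j := 3) (by decide)
      (by norm_num)
    norm_num at h ⊢
    exact h
  have hpos {a b : ℝ} (ha : 0 < a) (hb : 0 < b) : beta a b / 3 ≠ 0 :=
    (div_pos (beta_pos ha hb) three_pos).ne'
  have i0 := (Integrable.of_integral_ne_zero
    (h0.trans_ne (hpos (by norm_num) (by norm_num)))).const_mul ((√3 - 1) / 2)
  have i1 := (Integrable.of_integral_ne_zero
    (h1.trans_ne (hpos (by norm_num) (by norm_num)))).const_mul (3 / 2)
  have iF : IntegrableOn (fun x ↦ √3 * singularIntegrand x) (Ioi 0) :=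
    (integrableOn_singularIntegrand.mono_set (Ioi_subset_Ioi (by norm_num))).const_mul √3
  have hlim := tendsto_sqrt_one_add_pow_three_div_sub (c := 1 + √3) (by positivity)
  simp only [← add_assoc] at hlim
  have hftc := integral_Ioi_of_hasDerivAt_of_tendsto'
    (fun x hx ↦ hasDerivAt_sqrt_one_add_pow_three_div_sub (neg_one_lt_zero.trans_le hx))
    ((iF.sub i0).sub i1) hlim
  rw [integral_sub (f := fun x ↦ √3 * singularIntegrand x - (√3 - 1) / 2 * (1 / √(1 + x ^ 3)))
      (iF.sub i0) i1, integral_sub iF i0,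
    integral_const_mul, integral_const_mul, integral_const_mul, h0, h1] at hftc
  norm_num at hftc ⊢
  linarith

/-! ### Special values of the beta function -/

lemma Gamma_half_sub_mul_Gamma_add_half (s : ℝ) :
    Gamma (1 / 2 - s) * Gamma (s + 1 / 2) = π / cos (π * s) := by
  rw [← cos_neg, ← sin_pi_div_two_sub, mul_comm]
  convert Gamma_mul_Gamma_one_sub (s + 1 / 2) using 3
  · ring
  · ring_nf

lemma beta_half_sub {s : ℝ} (hs : -(1 / 2) < s) :
    beta s (1 / 2 - s) = beta s (1 / 2) / cos (π * s) := by
  have hG : 0 < Gamma (s + 1 / 2) := Gamma_pos_of_pos (by linarith)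
  have hreflect : Gamma (1 / 2 - s) = π / cos (π * s) / Gamma (s + 1 / 2) :=
    eq_div_of_mul_eq hG.ne' (Gamma_half_sub_mul_Gamma_add_half s)
  rw [beta, beta, add_sub_cancel, hreflect, Gamma_one_half_eq, ← sq_sqrt pi_pos.le,
    sqrt_sq (sqrt_nonneg π)]
  field_simp

lemma beta_three_halves_sub {s : ℝ} (hs : -(1 / 2) < s) (hs' : s ≠ 1 / 2) :
    beta s (3 / 2 - s) = (1 - 2 * s) / cos (π * s) * beta s (1 / 2) := by
  have hsub : Gamma (3 / 2 - s) = (1 / 2 - s) * Gamma (1 / 2 - s) := by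
    rw [← Gamma_add_one (sub_ne_zero.2 hs'.symm)]
    ring_nf
  have hhalf : Gamma (3 / 2) = 1 / 2 * Gamma (1 / 2) := by
    rw [← Gamma_add_one one_half_pos.ne']
    norm_num
  have hbeta : beta s (3 / 2 - s) = (1 - 2 * s) * beta s (1 / 2 - s) := by
    rw [beta, beta, add_sub_cancel, add_sub_cancel, hsub, hhalf]
    field_simp
  rw [hbeta, beta_half_sub hs]
  ring

lemma beta_one_half {s : ℝ} (hs : 0 < s) :
    beta s (1 / 2) = 2 ^ (2 * s - 1) * Gamma s ^ 2 / Gamma (2 * s) := by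
  have hG : 0 < Gamma (s + 1 / 2) := Gamma_pos_of_pos (by linarith)
  have hG2 : 0 < Gamma (2 * s) := Gamma_pos_of_pos (by linarith)
  have hpow : (2 : ℝ) ^ (2 * s - 1) * 2 ^ (1 - 2 * s) = 1 := by
    rw [← rpow_add two_pos]
    simp
  rw [beta, Gamma_one_half_eq, div_eq_div_iff hG.ne' hG2.ne']
  linear_combination -Gamma s * √π * Gamma (2 * s) * hpow -
    2 ^ (2 * s - 1) * Gamma s * Gamma_mul_Gamma_add_half s

lemma beta_one_third_one_sixth : beta (1 / 3) (1 / 6) = 2 * beta (1 / 3) (1 / 2) := by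
  have h := beta_half_sub (s := 1 / 3) (by norm_num)
  rw [mul_one_div, cos_pi_div_three] at h
  norm_num at h ⊢
  linarith

lemma beta_two_thirds_five_sixths : beta (2 / 3) (5 / 6) = 2 / 3 * beta (2 / 3) (1 / 2) := by
  have hcos : cos (π * (2 / 3)) = -(1 / 2) := by
    rw [← cos_pi_div_three, ← cos_pi_sub]
    ring_nf
  have h := beta_three_halves_sub (s := 2 / 3) (by norm_num) (by norm_num)
  rw [hcos] at h
  norm_num at h ⊢
  linarith

lemma Gamma_two_thirds : Gamma (2 / 3) = 2 * π / (√3 * Gamma (1 / 3)) := by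
  have h := Gamma_mul_Gamma_one_sub (1 / 3)
  rw [mul_one_div, sin_pi_div_three] at h
  norm_num at h
  field_simp at h ⊢
  linarith

lemma beta_one_third_one_half :
    beta (1 / 3) (1 / 2) = √3 * Gamma (1 / 3) ^ 3 / (2 * 2 ^ (1 / 3 : ℝ) * π) := by
  have hpow : (2 : ℝ) ^ (2 * (1 / 3 : ℝ) - 1) = (2 ^ (1 / 3 : ℝ))⁻¹ := by
    rw [← rpow_neg zero_le_two]
    norm_num
  rw [beta_one_half (by norm_num), hpow, mul_one_div, Gamma_two_thirds]
  field_simp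

lemma beta_two_thirds_one_half :
    beta (2 / 3) (1 / 2) = 4 * 2 ^ (1 / 3 : ℝ) * π ^ 2 / Gamma (1 / 3) ^ 3 := by
  have h3 : √3 ^ 2 = 3 := sq_sqrt zero_le_three
  have hfour : Gamma (2 * (2 / 3)) = 1 / 3 * Gamma (1 / 3) := by
    rw [← Gamma_add_one (by norm_num)]
    norm_num
  have hpow : (2 : ℝ) ^ (2 * (2 / 3 : ℝ) - 1) = 2 ^ (1 / 3 : ℝ) := by norm_num
  rw [beta_one_half (by norm_num), hpow, hfour, Gamma_two_thirds, div_pow, mul_pow, mul_pow, h3]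
  field_simp
  norm_num

/-! ### The singular value -/

lemma ellipticE_singular_modulus_eq_beta :
    ellipticE ((√6 + √2) / 4) =
      ((√3 - 1) * beta (1 / 3) (1 / 2) + beta (2 / 3) (1 / 2)) / (4 * √√3) := by
  have hsplit := intervalIntegral.integral_interval_add_Ioi integrableOn_singularIntegrand
    (integrableOn_singularIntegrand.mono_set (Ioi_subset_Ioi neg_one_lt_zero.le))
  have hsum : √3 * ∫ x in Ioi (-1), singularIntegrand x =
      ((√3 - 1) * beta (1 / 3) (1 / 2) + beta (2 / 3) (1 / 2)) / 2 := by
    rw [← hsplit, mul_add, sqrt_three_mul_integral_singularIntegrand,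
      sqrt_three_mul_integral_Ioi_singularIntegrand, beta_one_third_one_sixth,
      beta_two_thirds_five_sixths]
    ring
  have hsqrt : √√3 ^ 2 = √3 := sq_sqrt (sqrt_nonneg 3)
  rw [eq_div_iff (by positivity)]
  linear_combination 2 * √√3 * two_mul_ellipticE_eq_integral_singularIntegrand + 2 * hsum +
    2 * (∫ x in Ioi (-1), singularIntegrand x) * hsqrt

lemma two_rpow_neg_ten_thirds : (2 : ℝ) ^ (-(10 : ℝ) / 3) = (8 * 2 ^ (1 / 3 : ℝ))⁻¹ := by
  have hexp : -(10 : ℝ) / 3 = -(3 + 1 / 3) := by norm_num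
  rw [hexp, rpow_neg zero_le_two, rpow_add two_pos]
  norm_num

lemma sqrt_sqrt_three : √√3 = 3 ^ (1 / 4 : ℝ) := by
  rw [sqrt_eq_rpow, sqrt_eq_rpow, ← rpow_mul zero_le_three]
  norm_num

/-- `E(k₊) = 2^(1/3)·3^(-1/4)·π²·Γ(1/3)⁻³ + 2^(-10/3)·3^(1/4)·π⁻¹·(√3-1)·Γ(1/3)³`
for `k₊ = (√6+√2)/4`. -/
theorem ellipticE_singular_value_plus :
    ellipticE ((Real.sqrt 6 + Real.sqrt 2) / 4) =
      (2:ℝ) ^ ((1:ℝ)/3) * (3:ℝ) ^ (-(1:ℝ)/4) * π ^ 2 * (Real.Gamma (1/3)) ^ (-(3:ℤ)) +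
      (2:ℝ) ^ (-(10:ℝ)/3) * (3:ℝ) ^ ((1:ℝ)/4) * π⁻¹ * (Real.sqrt 3 - 1) * Real.Gamma (1/3) ^ 3 := by
  have hsqrt : √√3 ^ 2 = √3 := sq_sqrt (sqrt_nonneg 3)
  have hGpow : Gamma (1 / 3) ^ (-(3 : ℤ)) = (Gamma (1 / 3) ^ 3)⁻¹ := by
    rw [zpow_neg, zpow_ofNat]
  rw [ellipticE_singular_modulus_eq_beta, beta_one_third_one_half, beta_two_thirds_one_half,
    two_rpow_neg_ten_thirds, neg_div, rpow_neg zero_le_three, ← sqrt_sqrt_three, hGpow]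
  field_simp
  rw [hsqrt]
  ring
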